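/- Assume α_i + i/r > 0 for every i = 0,…,r−1 and no α_i is a negative integer. For u ∈ [0,1]^r let E_u(z) = exp(θ z u_0 u_1 ⋯ u_{r−1}). Then for every x ∈ ℂ∖{0}, E_μ(x) = c_μ ∫_{[0,1]^r} [ T_0 E_u(x) + Σ_{k=1}^{r−1} θ^{−k} T_k(L_{a_{k−1}} ∘ ⋯ ∘ L_{a_0} E_u)(x) ] w_μ(u) du, where the operators T_k and L_a act on the variable x. -/

import Mathlib

open Complex MeasureTheory Real Filter Topology

noncomputable section

/-- ω = exp(2πi/r) -/
def om (r : ℕ) : ℂ := Complex.exp (2 * Real.pi * Complex.I / r)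

/-- θ = exp(iπ/r) -/
def th (r : ℕ) : ℂ := Complex.exp (Real.pi * Complex.I / r)

/-- projector T_k -/
def Tk (r k : ℕ) (g : ℂ → ℂ) (x : ℂ) : ℂ :=
  (r : ℂ)⁻¹ * ∑ n ∈ Finset.range r, om r ^ (k * n) * g (om r ^ n * x)

/-- L_a f = f' + (a/x) f -/
def Lop (a : ℝ) (f : ℂ → ℂ) (x : ℂ) : ℂ := deriv f x + (a / x) * f x

/-- a_k = r α_k + k -/
def acoef (r : ℕ) (α : ℕ → ℝ) (k : ℕ) : ℝ := r * α k + k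

/-- Δ_μ = L_{a_{r-1}} ∘ ⋯ ∘ L_{a_0} -/
def Delta (r : ℕ) (α : ℕ → ℝ) (f : ℂ → ℂ) : ℂ → ℂ :=
  (List.range r).foldl (fun g i => Lop (acoef r α i) g) f

/-- D_μ -/
def Dop (r : ℕ) (α : ℕ → ℝ) (f : ℂ → ℂ) (x : ℂ) : ℂ :=
  deriv f x + (1 / x) * ∑ k ∈ Finset.range r, ((acoef r α k : ℝ) : ℂ) * Tk r k f x

/-- Pochhammer symbol (β)_n -/
def poch (β : ℝ) (n : ℕ) : ℝ := (ascPochhammer ℝ n).eval β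

/-- Bessel function of vector index -/
def jmu (r : ℕ) (α : ℕ → ℝ) (z : ℂ) : ℂ :=
  ∑' n : ℕ, (-1 : ℂ) ^ n * z ^ (n * r) /
    ((∏ i ∈ Finset.range r, ((poch (α i + 1) n : ℝ) : ℂ)) * (r : ℂ) ^ (n * r))

/-- r-Dunkl kernel -/
def Emu (r : ℕ) (α : ℕ → ℝ) (z : ℂ) : ℂ :=
  ∑ k ∈ Finset.range r, th r ^ (-(k : ℤ)) * (Dop r α)^[k] (jmu r α) z

/-- generalized cosine -/
def cosr (r : ℕ) (z : ℂ) : ℂ :=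
  ∑' n : ℕ, (-1 : ℂ) ^ n * z ^ (n * r) /
    ((∏ i ∈ Finset.range r, ((poch (1 - (i : ℝ) / r) n : ℝ) : ℂ)) * (r : ℂ) ^ (n * r))

/-- weight w_μ on [0,1]^r -/
def wmu (r : ℕ) (α : ℕ → ℝ) (u : Fin r → ℝ) : ℝ :=
  ∏ i : Fin r, (1 - u i ^ r) ^ (α i.1 + (i.1 : ℝ) / r - 1) * u i ^ (r - (i.1 + 1))

/-- constant c_μ -/
def cmu (r : ℕ) (α : ℕ → ℝ) : ℝ :=
  ∏ i ∈ Finset.range r,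
    r * Real.Gamma (α i + 1) / (Real.Gamma (α i + (i : ℝ) / r) * Real.Gamma (1 - (i : ℝ) / r))

/-- L_{a_{k-1}} ∘ ⋯ ∘ L_{a_0} -/
def Lcomp (r : ℕ) (α : ℕ → ℝ) (k : ℕ) (f : ℂ → ℂ) : ℂ → ℂ :=
  (List.range k).foldl (fun g i => Lop (acoef r α i) g) f

/-- r-Riemann–Liouville on the half line -/
def Rop (r : ℕ) (a : ℝ) (g : ℝ → ℂ) (x : ℝ) : ℂ :=
  ∫ t in (0:ℝ)..1, g (x * t) * (((1 - t ^ r) ^ (a - 1) : ℝ) : ℂ)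

/-- r-Riemann–Liouville along rays in ℂ -/
def RopC (r : ℕ) (a : ℝ) (f : ℂ → ℂ) (z : ℂ) : ℂ :=
  ∫ t in (0:ℝ)..1, f (z * t) * (((1 - t ^ r) ^ (a - 1) : ℝ) : ℂ)

/-- the operator M h = (1/(r x^{r-1})) h' -/
def Mop (r : ℕ) (h : ℝ → ℂ) (x : ℝ) : ℂ := ((1 / (r * x ^ (r - 1)) : ℝ) : ℂ) * deriv h x

/-- hermitian product ⟨f,g⟩_a -/
def inr (r : ℕ) (a : ℝ) (f g : ℂ → ℂ) : ℂ :=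
  ∫ t in Set.Ioi (0:ℝ),
    (∑ m ∈ Finset.range r, f (om r ^ m * t) * (starRingEnd ℂ) (g (om r ^ m * t))) *
      ((t ^ a : ℝ) : ℂ)

/-- transmutation operator V_μ -/
def Vmu (r : ℕ) (α : ℕ → ℝ) (h : ℂ → ℂ) (x : ℂ) : ℂ :=
  (cmu r α : ℂ) *
    ∫ u in Set.univ.pi (fun _ : Fin r => Set.Icc (0:ℝ) 1),
      (Tk r 0 (fun z => h (z * ∏ i, (u i : ℂ))) x +
        ∑ k ∈ Finset.Ico 1 r,
          th r ^ (-(k : ℤ)) * Tk r k (Lcomp r α k (fun z => h (z * ∏ i, (u i : ℂ)))) x) *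
        ((wmu r α u : ℝ) : ℂ)

/-!
The operators `T_k` and `L_a` send monomials to multiples of monomials, so everything is decided on
Laurent series. On `z ^ m` the composition `L_{a_{k-1}} ∘ ⋯ ∘ L_{a_0}` yields a multiple of
`z ^ (m - k)`, which `T_k` keeps if `r ∣ m` and annihilates otherwise. On series in `z ^ r` the
same composition coincides with `D_μ ^ k`, because after `k` steps only the term `T_k` of `D_μ`
survives. Hence for every entire `f` the integrand is `∑ₖ θ ^ (-k) D_μ ^ k` applied to the part of
`f (u₀ ⋯ u_{r-1} z)` that is a series in `z ^ r`, and integrating against `c_μ w_μ` multiplies its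
Taylor coefficient of index `m = n r` by the normalised moment `c_μ ∫ (u₀ ⋯ u_{r-1}) ^ m w_μ`. This
moment is the product over `i < r` of ratios of Beta functions, equal to
`(1 - i / r)_n / (α_i + 1)_n`. Since `∏ᵢ (1 - i / r)_n = (n r)! / r ^ (n r)` and `θ ^ r = -1`, it
turns the Taylor coefficients of `exp (θ z)` into those of `j_μ`.
-/

section EntireSeries

/-- The sequence `c` is the Taylor sequence at `0` of an entire function. -/
def IsEntireSeq (c : ℕ → ℂ) : Prop := ∀ z : ℂ, Summable fun m ↦ c m * z ^ m

/-- The sum of the power series with coefficients `c`. -/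
def powerSum (c : ℕ → ℂ) (z : ℂ) : ℂ := ∑' m, c m * z ^ m

/-- The sum of the Laurent series `∑ₘ c m * z ^ (m - k)`, whose pole at `0` has order at most `k`.
At `z = 0` its value is junk unless `k = 0`. -/
def laurentSum (k : ℕ) (c : ℕ → ℂ) (z : ℂ) : ℂ := (z ^ k)⁻¹ * powerSum c z

variable {c d : ℕ → ℂ}

lemma laurentSum_zero (c : ℕ → ℂ) : laurentSum 0 c = powerSum c := by
  ext z
  simp [laurentSum]

lemma powerSum_mul_right (c : ℕ → ℂ) (z w : ℂ) :
    powerSum c (z * w) = powerSum (fun m ↦ c m * w ^ m) z :=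
  tsum_congr fun m ↦ by ring

namespace IsEntireSeq

lemma mul_pow (hc : IsEntireSeq c) (w : ℂ) : IsEntireSeq fun m ↦ c m * w ^ m :=
  fun z ↦ (hc (w * z)).congr fun m ↦ by ring

lemma of_norm_le {C : ℝ} (hc : IsEntireSeq c) (h : ∀ m, ‖d m‖ ≤ C * ‖c m‖) : IsEntireSeq d := by
  intro z
  refine Summable.of_norm_bounded ((hc z).norm.mul_left C) fun m ↦ ?_
  rw [norm_mul, norm_mul, ← mul_assoc]
  gcongr
  exact h m

lemma indicator (hc : IsEntireSeq c) (s : Set ℕ) : IsEntireSeq (s.indicator c) :=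
  hc.of_norm_le (C := 1) fun m ↦ by simpa using norm_indicator_le_norm_self c m

lemma natCast_add_mul (hc : IsEntireSeq c) (b : ℂ) : IsEntireSeq fun m ↦ (m + b) * c m := by
  refine (hc.mul_pow 2).of_norm_le (C := 1 + ‖b‖) fun m ↦ ?_
  have natCast_le : (m : ℝ) ≤ 2 ^ m := by exact_mod_cast Nat.lt_two_pow_self.le
  have one_le : (1 : ℝ) ≤ 2 ^ m := one_le_pow₀ one_le_two
  have factor_le : ‖(m : ℂ) + b‖ ≤ (1 + ‖b‖) * 2 ^ m := calc
    ‖(m : ℂ) + b‖ ≤ m + ‖b‖ := by simpa using norm_add_le (m : ℂ) b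
    _ ≤ 2 ^ m + ‖b‖ * 2 ^ m := by
      gcongr
      exact le_mul_of_one_le_right (norm_nonneg b) one_le
    _ = (1 + ‖b‖) * 2 ^ m := by ring
  calc ‖((m : ℂ) + b) * c m‖ = ‖(m : ℂ) + b‖ * ‖c m‖ := norm_mul _ _
    _ ≤ (1 + ‖b‖) * 2 ^ m * ‖c m‖ := by gcongr
    _ = (1 + ‖b‖) * ‖c m * 2 ^ m‖ := by
      rw [norm_mul, norm_pow, Complex.norm_ofNat]
      ring

end IsEntireSeq

lemma isEntireSeq_pow_div_factorial (y : ℂ) : IsEntireSeq fun m ↦ y ^ m / m.factorial :=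
  fun z ↦ (NormedSpace.expSeries_div_summable (y * z)).congr fun m ↦ by ring

lemma powerSum_pow_div_factorial (y : ℂ) :
    powerSum (fun m ↦ y ^ m / m.factorial) = fun z ↦ Complex.exp (y * z) := by
  ext z
  rw [Complex.exp_eq_exp_ℂ, NormedSpace.exp_eq_tsum_div]
  exact tsum_congr fun m ↦ by ring

lemma hasSum_laurentSum (hc : IsEntireSeq c) (k : ℕ) (z : ℂ) :
    HasSum (fun m ↦ (z ^ k)⁻¹ * (c m * z ^ m)) (laurentSum k c z) :=
  (hc z).hasSum.mul_left _

lemma hasDerivAt_powerSum (hc : IsEntireSeq c) (x : ℂ) :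
    HasDerivAt (powerSum c) (∑' m, c m * (m * x ^ (m - 1))) x := by
  have mem_ball : x ∈ Metric.ball (0 : ℂ) (‖x‖ + 1) := by simp
  have majorant : Summable fun m ↦ ‖(m + 0) * c m * ((‖x‖ + 1 : ℝ) : ℂ) ^ m‖ :=
    (hc.natCast_add_mul 0 _).norm
  refine hasDerivAt_tsum_of_isPreconnected majorant Metric.isOpen_ball
    (convex_ball _ _).isPreconnected (fun m z _ ↦ (hasDerivAt_pow m z).const_mul (c m))
    (fun m z hz ↦ ?_) mem_ball (hc x) mem_ball
  have norm_le : ‖z‖ ≤ ‖x‖ + 1 := (mem_ball_zero_iff.1 hz).le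
  have pow_le : ‖z‖ ^ (m - 1) ≤ (‖x‖ + 1) ^ m := calc
    ‖z‖ ^ (m - 1) ≤ (‖x‖ + 1) ^ (m - 1) := by gcongr
    _ ≤ (‖x‖ + 1) ^ m := pow_le_pow_right₀ (by simp) (Nat.sub_le m 1)
  calc ‖c m * (m * z ^ (m - 1))‖ = ‖c m‖ * m * ‖z‖ ^ (m - 1) := by simp [mul_assoc]
    _ ≤ ‖c m‖ * m * (‖x‖ + 1) ^ m := by gcongr
    _ = ‖(m + 0) * c m * ((‖x‖ + 1 : ℝ) : ℂ) ^ m‖ := by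
      rw [norm_mul, norm_mul, norm_pow, Complex.norm_real, Real.norm_of_nonneg (by positivity)]
      simp [mul_comm]

lemma powerSum_natCast_add_mul (hc : IsEntireSeq c) (b x : ℂ) :
    powerSum (fun m ↦ (m + b) * c m) x = x * deriv (powerSum c) x + b * powerSum c x := by
  have term_eq (m : ℕ) : (m + 0) * c m * x ^ m = x * (c m * (m * x ^ (m - 1))) := by
    cases m with
    | zero => simp
    | succ m => rw [Nat.add_sub_cancel]; ring
  have summable_deriv : Summable fun m : ℕ ↦ x * (c m * (m * x ^ (m - 1))) :=
    (hc.natCast_add_mul 0 x).congr term_eq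
  rw [(hasDerivAt_powerSum hc x).deriv, powerSum, powerSum, ← tsum_mul_left, ← tsum_mul_left,
    ← summable_deriv.tsum_add ((hc x).mul_left b)]
  exact tsum_congr fun m ↦ by rw [← term_eq]; ring

lemma hasDerivAt_inv_pow (k : ℕ) {x : ℂ} (hx : x ≠ 0) :
    HasDerivAt (fun z : ℂ ↦ (z ^ k)⁻¹) (-k * (x ^ (k + 1))⁻¹) x := by
  have := hasDerivAt_zpow (-k : ℤ) x (.inl hx)
  simpa [← zpow_natCast, ← zpow_neg, sub_eq_add_neg, add_comm] using this

end EntireSeries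

section DunklOperators

variable {c : ℕ → ℂ} {k : ℕ} {x : ℂ}

lemma Lop_laurentSum (hc : IsEntireSeq c) (a : ℝ) (k : ℕ) (hx : x ≠ 0) :
    Lop a (laurentSum k c) x = laurentSum (k + 1) (fun m ↦ (m + (a - k)) * c m) x := by
  have hderiv : deriv (laurentSum k c) x =
      -k * (x ^ (k + 1))⁻¹ * powerSum c x + (x ^ k)⁻¹ * deriv (powerSum c) x :=
    ((hasDerivAt_inv_pow k hx).mul
      (hasDerivAt_powerSum hc x).differentiableAt.hasDerivAt).deriv
  rw [Lop, hderiv, laurentSum, laurentSum, powerSum_natCast_add_mul hc]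
  field_simp
  ring

lemma eqOn_Lop (a : ℝ) {f g : ℂ → ℂ} (hfg : Set.EqOn f g {0}ᶜ) :
    Set.EqOn (Lop a f) (Lop a g) {0}ᶜ := fun z hz ↦ by
  rw [Lop, Lop, hfg hz, hfg.deriv isOpen_compl_singleton hz]

lemma Lcomp_succ (r : ℕ) (α : ℕ → ℝ) (k : ℕ) (f : ℂ → ℂ) :
    Lcomp r α (k + 1) f = Lop (acoef r α k) (Lcomp r α k f) := by
  simp [Lcomp, List.range_succ]

/-- The factor in `L_{a_{k-1}} ∘ ⋯ ∘ L_{a_0} z ^ m = lowerFactor r α k m * z ^ (m - k)`. Each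
`L_{a_i}` acts on an exponent already lowered by `i`, which cancels the `i` in `a_i = r α_i + i`. -/
def lowerFactor (r : ℕ) (α : ℕ → ℝ) (k m : ℕ) : ℂ := ∏ i ∈ Finset.range k, (m + r * α i : ℂ)

lemma lowerFactor_succ (r : ℕ) (α : ℕ → ℝ) (k m : ℕ) :
    lowerFactor r α (k + 1) m = (m + (acoef r α k - k)) * lowerFactor r α k m := by
  simp [lowerFactor, Finset.prod_range_succ, acoef, mul_comm]

lemma IsEntireSeq.lowerFactor_mul (hc : IsEntireSeq c) (r : ℕ) (α : ℕ → ℝ) (k : ℕ) :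
    IsEntireSeq fun m ↦ lowerFactor r α k m * c m := by
  induction k with
  | zero => simpa [lowerFactor] using hc
  | succ k ih => simpa [lowerFactor_succ, mul_assoc] using ih.natCast_add_mul (acoef r α k - k)

lemma eqOn_Lcomp_powerSum (hc : IsEntireSeq c) (r : ℕ) (α : ℕ → ℝ) (k : ℕ) :
    Set.EqOn (Lcomp r α k (powerSum c))
      (laurentSum k fun m ↦ lowerFactor r α k m * c m) {0}ᶜ := by
  induction k with
  | zero => simp [Lcomp, lowerFactor, laurentSum_zero, Set.eqOn_refl]
  | succ k ih =>
    intro x hx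
    rw [Lcomp_succ, eqOn_Lop _ ih hx, Lop_laurentSum (hc.lowerFactor_mul r α k) _ k hx]
    simp only [lowerFactor_succ, mul_assoc]

variable {r : ℕ}

lemma isPrimitiveRoot_om (hr : r ≠ 0) : IsPrimitiveRoot (om r) r :=
  Complex.isPrimitiveRoot_exp r hr

lemma om_ne_zero (r : ℕ) : om r ≠ 0 := Complex.exp_ne_zero _

lemma th_pow_self (hr : r ≠ 0) : th r ^ r = -1 := by
  rw [th, ← Complex.exp_nat_mul, mul_div_cancel₀ _ (Nat.cast_ne_zero.2 hr), Complex.exp_pi_mul_I]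

lemma sum_range_div_pow_of_isPrimitiveRoot {K : Type*} [Field K] {ζ : K} (hr : r ≠ 0)
    (hζ : IsPrimitiveRoot ζ r) (a b : ℕ) :
    ∑ n ∈ Finset.range r, (ζ ^ a / ζ ^ b) ^ n = if a ≡ b [MOD r] then (r : K) else 0 := by
  have div_eq_one : ζ ^ a / ζ ^ b = 1 ↔ a ≡ b [MOD r] := by
    rw [div_eq_one_iff_eq (pow_ne_zero b (hζ.ne_zero hr)),
      (hζ.isOfFinOrder hr).pow_eq_pow_iff_modEq, ← hζ.eq_orderOf]
  have div_pow_self : (ζ ^ a / ζ ^ b) ^ r = 1 := by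
    rw [div_pow, pow_right_comm ζ a, pow_right_comm ζ b, hζ.pow_eq_one, one_pow, one_pow, div_one]
  split_ifs with hab
  · simp [div_eq_one.2 hab]
  · rw [geom_sum_eq (mt div_eq_one.1 hab), div_pow_self, sub_self, zero_div]

lemma Tk_laurentSum (hr : r ≠ 0) (hc : IsEntireSeq c) (j k : ℕ) (x : ℂ) :
    Tk r j (laurentSum k c) x = laurentSum k ({m | m + j ≡ k [MOD r]}.indicator c) x := by
  have hasSum_Tk := (hasSum_sum fun n (_ : n ∈ Finset.range r) ↦
    (hasSum_laurentSum hc k (om r ^ n * x)).mul_left (om r ^ (j * n))).mul_left (r : ℂ)⁻¹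
  refine hasSum_Tk.unique <| (hasSum_laurentSum (hc.indicator _) k x).congr_fun fun m ↦ ?_
  have term_eq (n : ℕ) : om r ^ (j * n) * (((om r ^ n * x) ^ k)⁻¹ * (c m * (om r ^ n * x) ^ m)) =
      (om r ^ (m + j) / om r ^ k) ^ n * ((x ^ k)⁻¹ * (c m * x ^ m)) := by
    simp only [div_pow, mul_pow, mul_inv, pow_add, ← pow_mul, mul_comm n]
    ring
  simp only [term_eq, ← Finset.sum_mul, Set.indicator_apply, Set.mem_ofPred_eq,
    sum_range_div_pow_of_isPrimitiveRoot hr (isPrimitiveRoot_om hr)]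
  split_ifs <;> simp [hr]

lemma Tk_laurentSum_of_support_subset (hc : IsEntireSeq c)
    (hsupp : Function.support c ⊆ {m | r ∣ m}) {j k : ℕ} (hj : j < r) (hk : k < r) (x : ℂ) :
    Tk r j (laurentSum k c) x = if j = k then laurentSum k c x else 0 := by
  have mem_iff {m : ℕ} (hm : r ∣ m) : m + j ≡ k [MOD r] ↔ j = k := by
    rw [Nat.ModEq, Nat.add_mod, Nat.mod_eq_zero_of_dvd hm, zero_add, Nat.mod_mod,
      Nat.mod_eq_of_lt hj, Nat.mod_eq_of_lt hk]
  have indicator_eq : {m | m + j ≡ k [MOD r]}.indicator c = if j = k then c else 0 := by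
    ext m
    by_cases hm : r ∣ m
    · simp only [Set.indicator_apply, Set.mem_ofPred_eq, mem_iff hm]
      split_ifs <;> rfl
    · have : c m = 0 := Function.notMem_support.1 fun h ↦ hm (hsupp h)
      split_ifs <;> simp [Set.indicator_apply, this]
  rw [Tk_laurentSum (by omega) hc, indicator_eq]
  split_ifs <;> simp [laurentSum, powerSum]

lemma Tk_congr {f g : ℂ → ℂ} (hfg : Set.EqOn f g {0}ᶜ) (r j : ℕ) (hx : x ≠ 0) :
    Tk r j f x = Tk r j g x := by
  simp only [Tk, hfg (mul_ne_zero (pow_ne_zero _ (om_ne_zero r)) hx)]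

lemma Dop_congr {f g : ℂ → ℂ} (hfg : Set.EqOn f g {0}ᶜ) (r : ℕ) (α : ℕ → ℝ) (hx : x ≠ 0) :
    Dop r α f x = Dop r α g x := by
  simp only [Dop, hfg.deriv isOpen_compl_singleton hx, Tk_congr hfg r _ hx]

lemma Dop_laurentSum (hc : IsEntireSeq c) (hsupp : Function.support c ⊆ {m | r ∣ m})
    (α : ℕ → ℝ) (hk : k < r) (x : ℂ) :
    Dop r α (laurentSum k c) x = Lop (acoef r α k) (laurentSum k c) x := by
  have sum_eq : ∑ j ∈ Finset.range r, (acoef r α j : ℂ) * Tk r j (laurentSum k c) x =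
      acoef r α k * laurentSum k c x := by
    rw [Finset.sum_congr rfl fun j hj ↦ by
      rw [Tk_laurentSum_of_support_subset hc hsupp (Finset.mem_range.1 hj) hk]]
    simp [hk]
  rw [Dop, Lop, sum_eq, ← mul_assoc, one_div_mul_eq_div]

lemma eqOn_Dop_iterate_powerSum (hc : IsEntireSeq c) (hsupp : Function.support c ⊆ {m | r ∣ m})
    (α : ℕ → ℝ) (hk : k ≤ r) :
    Set.EqOn ((Dop r α)^[k] (powerSum c)) (Lcomp r α k (powerSum c)) {0}ᶜ := by
  induction k with
  | zero => exact Set.eqOn_refl _ _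
  | succ k ih =>
    intro x hx
    have hLcomp := eqOn_Lcomp_powerSum hc r α k
    have hsupp' : (Function.support fun m ↦ lowerFactor r α k m * c m) ⊆ {m | r ∣ m} :=
      (Function.support_mul_subset_right _ _).trans hsupp
    rw [Function.iterate_succ_apply', Dop_congr ((ih (by omega)).trans hLcomp) r α hx,
      Dop_laurentSum (hc.lowerFactor_mul r α k) hsupp' α hk, Lcomp_succ, eqOn_Lop _ hLcomp hx]

lemma Tk_Lcomp_powerSum (hr : r ≠ 0) (hc : IsEntireSeq c) (α : ℕ → ℝ) (k : ℕ) (hx : x ≠ 0) :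
    Tk r k (Lcomp r α k (powerSum c)) x =
      Lcomp r α k (powerSum ({m | r ∣ m}.indicator c)) x := by
  have hset : {m | m + k ≡ k [MOD r]} = {m | r ∣ m} := by
    ext m
    simp
  rw [Tk_congr (eqOn_Lcomp_powerSum hc r α k) r k hx, Tk_laurentSum hr (hc.lowerFactor_mul r α k),
    eqOn_Lcomp_powerSum (hc.indicator _) r α k hx, hset]
  congr 1
  ext m
  exact Set.indicator_mul_right ..

/-- The value at `x` of `∑ₖ θ ^ (-k) • L_{a_{k-1}} ∘ ⋯ ∘ L_{a_0}` applied to `z ^ m`. -/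
def monomialKernel (r : ℕ) (α : ℕ → ℝ) (x : ℂ) (m : ℕ) : ℂ :=
  ∑ k ∈ Finset.range r, th r ^ (-(k : ℤ)) * ((x ^ k)⁻¹ * (lowerFactor r α k m * x ^ m))

lemma hasSum_mul_monomialKernel (hc : IsEntireSeq c) (r : ℕ) (α : ℕ → ℝ) (hx : x ≠ 0) :
    HasSum (fun m ↦ c m * monomialKernel r α x m)
      (∑ k ∈ Finset.range r, th r ^ (-(k : ℤ)) * Lcomp r α k (powerSum c) x) := by
  simp only [eqOn_Lcomp_powerSum hc r α _ hx]
  refine (hasSum_sum fun k _ ↦ (hasSum_laurentSum (hc.lowerFactor_mul r α k) k x).mul_left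
    (th r ^ (-(k : ℤ)))).congr_fun fun m ↦ ?_
  rw [monomialKernel, Finset.mul_sum]
  exact Finset.sum_congr rfl fun k _ ↦ by ring

end DunklOperators

section PowerMoments

variable {X 𝕜 : Type*} [MeasurableSpace X] [RCLike 𝕜] {ν : Measure X} {g w : X → 𝕜}

lemma ae_norm_pow_mul_le (hg : ∀ᵐ u ∂ν, ‖g u‖ ≤ 1) (w : X → 𝕜) (m : ℕ) :
    ∀ᵐ u ∂ν, ‖g u ^ m * w u‖ ≤ ‖w u‖ := by
  filter_upwards [hg] with u hu
  rw [norm_mul, norm_pow]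
  exact mul_le_of_le_one_left (norm_nonneg _) (pow_le_one₀ (norm_nonneg _) hu)

lemma norm_integral_pow_mul_le (hg : ∀ᵐ u ∂ν, ‖g u‖ ≤ 1) (hw : Integrable w ν) (m : ℕ) :
    ‖∫ u, g u ^ m * w u ∂ν‖ ≤ ∫ u, ‖w u‖ ∂ν :=
  norm_integral_le_of_norm_le hw.norm (ae_norm_pow_mul_le hg w m)

lemma hasSum_integral_tsum_mul_pow_mul {b : ℕ → 𝕜} (hb : Summable fun m ↦ ‖b m‖)
    (hgm : AEStronglyMeasurable g ν) (hg : ∀ᵐ u ∂ν, ‖g u‖ ≤ 1) (hw : Integrable w ν) :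
    HasSum (fun m ↦ b m * ∫ u, g u ^ m * w u ∂ν) (∫ u, (∑' m, b m * g u ^ m) * w u ∂ν) := by
  simp only [← integral_const_mul]
  refine hasSum_integral_of_dominated_convergence (fun m u ↦ ‖b m‖ * ‖w u‖)
    (fun m ↦ ((hgm.pow m).mul hw.1).const_mul _) (fun m ↦ ?_)
    (.of_forall fun u ↦ hb.mul_right _) ?_ ?_
  · filter_upwards [ae_norm_pow_mul_le hg w m] with u hu
    rw [norm_mul]
    gcongr
  · simpa only [tsum_mul_right] using hw.norm.const_mul _
  · filter_upwards [hg] with u hu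
    have summable_pow : Summable fun m ↦ b m * g u ^ m :=
      .of_norm_bounded hb fun m ↦ by
        simpa using mul_le_of_le_one_right (norm_nonneg (b m)) (pow_le_one₀ (norm_nonneg _) hu)
    simpa only [mul_assoc] using summable_pow.hasSum.mul_right (w u)

end PowerMoments

section BetaIntegrals

open ProbabilityTheory (beta)

variable {p q s : ℝ}

lemma ofReal_rpow_mul_one_sub_rpow {t : ℝ} (ht : t ∈ Set.Ioo (0 : ℝ) 1) (p s : ℝ) :
    ((t ^ (p - 1) * (1 - t) ^ (s - 1) : ℝ) : ℂ) =
      (t : ℂ) ^ ((p : ℂ) - 1) * (1 - (t : ℂ)) ^ ((s : ℂ) - 1) := by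
  rw [Complex.ofReal_mul, Complex.ofReal_cpow ht.1.le, Complex.ofReal_cpow (sub_nonneg.2 ht.2.le)]
  push_cast
  rfl

lemma integrableOn_rpow_mul_one_sub_rpow (hp : 0 < p) (hs : 0 < s) :
    IntegrableOn (fun t : ℝ ↦ t ^ (p - 1) * (1 - t) ^ (s - 1)) (Set.Ioo 0 1) := by
  have hconv := Complex.betaIntegral_convergent (u := p) (v := s) (by simpa) (by simpa)
  rw [intervalIntegrable_iff_integrableOn_Ioo_of_le zero_le_one] at hconv
  have hre := (hconv.congr_fun (fun t ht ↦ (ofReal_rpow_mul_one_sub_rpow ht p s).symm)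
    measurableSet_Ioo).re
  simpa [IntegrableOn] using hre

lemma integral_rpow_mul_one_sub_rpow (hp : 0 < p) (hs : 0 < s) :
    ∫ t in Set.Ioo (0 : ℝ) 1, t ^ (p - 1) * (1 - t) ^ (s - 1) = beta p s := by
  rw [ProbabilityTheory.beta_eq_betaIntegralReal p s hp hs, Complex.betaIntegral,
    intervalIntegral.integral_of_le zero_le_one, integral_Ioc_eq_integral_Ioo,
    ← setIntegral_congr_fun measurableSet_Ioo fun t ht ↦ ofReal_rpow_mul_one_sub_rpow ht p s,
    integral_complex_ofReal, Complex.ofReal_re]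

lemma image_rpow_Ioo_zero_one (hq : 0 < q) :
    (fun u : ℝ ↦ u ^ q) '' Set.Ioo 0 1 = Set.Ioo 0 1 := by
  ext t
  constructor
  · rintro ⟨u, hu, rfl⟩
    exact ⟨Real.rpow_pos_of_pos hu.1 q, Real.rpow_lt_one hu.1.le hu.2 hq⟩
  · intro ht
    exact ⟨t ^ q⁻¹, ⟨Real.rpow_pos_of_pos ht.1 _, Real.rpow_lt_one ht.1.le ht.2 (inv_pos.2 hq)⟩,
      Real.rpow_inv_rpow ht.1.le hq.ne'⟩

lemma abs_mul_rpow_smul_beta_integrand (hq : 0 < q) {u : ℝ} (hu : 0 < u) (p s : ℝ) :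
    |q * u ^ (q - 1)| • ((u ^ q) ^ (p / q - 1) * (1 - u ^ q) ^ (s - 1)) =
      q * (u ^ (p - 1) * (1 - u ^ q) ^ (s - 1)) := by
  have exponent_eq : q - 1 + q * (p / q - 1) = p - 1 := by field_simp; ring
  rw [abs_of_nonneg (by positivity), ← Real.rpow_mul hu.le, ← exponent_eq, Real.rpow_add hu,
    smul_eq_mul]
  ring

lemma hasDerivWithinAt_rpow_Ioo_zero_one (q : ℝ) :
    ∀ u ∈ Set.Ioo (0 : ℝ) 1, HasDerivWithinAt (fun u ↦ u ^ q) (q * u ^ (q - 1)) (Set.Ioo 0 1) u :=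
  fun _ hu ↦ (Real.hasDerivAt_rpow_const (.inl hu.1.ne')).hasDerivWithinAt

lemma injOn_rpow_Ioo_zero_one (hq : 0 < q) : Set.InjOn (fun u : ℝ ↦ u ^ q) (Set.Ioo 0 1) :=
  (Real.rpow_left_injOn hq.ne').mono fun _ hu ↦ hu.1.le

lemma integrableOn_rpow_mul_one_sub_rpow_rpow (hp : 0 < p) (hq : 0 < q) (hs : 0 < s) :
    IntegrableOn (fun u : ℝ ↦ u ^ (p - 1) * (1 - u ^ q) ^ (s - 1)) (Set.Ioo 0 1) := by
  have hbeta := integrableOn_rpow_mul_one_sub_rpow (div_pos hp hq) hs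
  rw [← image_rpow_Ioo_zero_one hq, integrableOn_image_iff_integrableOn_abs_deriv_smul
    measurableSet_Ioo (hasDerivWithinAt_rpow_Ioo_zero_one q) (injOn_rpow_Ioo_zero_one hq),
    integrableOn_congr_fun (fun u hu ↦ abs_mul_rpow_smul_beta_integrand hq hu.1 p s)
      measurableSet_Ioo] at hbeta
  simpa [IntegrableOn, hq.ne'] using hbeta.const_mul q⁻¹

lemma integral_rpow_mul_one_sub_rpow_rpow (hp : 0 < p) (hq : 0 < q) (hs : 0 < s) :
    ∫ u in Set.Ioo (0 : ℝ) 1, u ^ (p - 1) * (1 - u ^ q) ^ (s - 1) = q⁻¹ * beta (p / q) s := by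
  have hbeta := integral_rpow_mul_one_sub_rpow (div_pos hp hq) hs
  rw [← image_rpow_Ioo_zero_one hq, integral_image_eq_integral_abs_deriv_smul
    measurableSet_Ioo (hasDerivWithinAt_rpow_Ioo_zero_one q) (injOn_rpow_Ioo_zero_one hq),
    setIntegral_congr_fun measurableSet_Ioo fun u hu ↦
      abs_mul_rpow_smul_beta_integrand hq hu.1 p s, integral_const_mul] at hbeta
  rw [← hbeta, inv_mul_cancel_left₀ hq.ne']

lemma poch_succ (β : ℝ) (n : ℕ) : poch β (n + 1) = poch β n * (β + n) :=
  ascPochhammer_succ_eval n β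

lemma Gamma_add_natCast {β : ℝ} (hβ : 0 < β) (n : ℕ) :
    Real.Gamma (β + n) = poch β n * Real.Gamma β := by
  induction n with
  | zero => simp [poch]
  | succ n ih =>
    rw [Nat.cast_succ, ← add_assoc, Real.Gamma_add_one (by positivity), ih, poch_succ]
    ring

lemma beta_add_natCast (hp : 0 < p) (hs : 0 < s) (n : ℕ) :
    beta (p + n) s = poch p n / poch (p + s) n * beta p s := by
  rw [beta, beta, Gamma_add_natCast hp, add_right_comm, Gamma_add_natCast (add_pos hp hs)]
  ring

lemma prod_poch_one_sub_div {r : ℕ} (hr : r ≠ 0) (n : ℕ) :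
    ∏ i ∈ Finset.range r, poch (1 - (i : ℝ) / r) n = ((n * r).factorial : ℝ) / r ^ (n * r) := by
  induction n with
  | zero => simp [poch]
  | succ n ih =>
    have factor_eq (i : ℕ) (hi : i ∈ Finset.range r) :
        1 - (i : ℝ) / r + n = (((n + 1) * r - i : ℕ) : ℝ) / r := by
      have : i ≤ (n + 1) * r := by nlinarith [Finset.mem_range.1 hi]
      rw [Nat.cast_sub this]
      push_cast
      field_simp
      ring
    have factorial_eq : (n * r).factorial * ((n + 1) * r).descFactorial r =
        ((n + 1) * r).factorial := by
      have := Nat.factorial_mul_descFactorial (Nat.le_mul_of_pos_left r n.succ_pos)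
      rwa [Nat.succ_mul, Nat.add_sub_cancel, ← Nat.succ_mul] at this
    simp only [poch_succ, Finset.prod_mul_distrib, ih]
    rw [Finset.prod_congr rfl factor_eq, Finset.prod_div_distrib, Finset.prod_const,
      Finset.card_range, ← Nat.cast_prod, ← Nat.descFactorial_eq_prod_range, div_mul_div_comm,
      ← Nat.cast_mul, factorial_eq, ← pow_add, Nat.succ_mul]

end BetaIntegrals

section WeightMoments

open ProbabilityTheory (beta)

/-- The cube `[0, 1] ^ r`. -/
abbrev unitCube (r : ℕ) : Set (Fin r → ℝ) := Set.univ.pi fun _ ↦ Set.Icc (0 : ℝ) 1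

/-- The `m`-th moment of `u₀ ⋯ u_{r-1}` with respect to the weight `w_μ` on the cube. -/
def weightMoment (r : ℕ) (α : ℕ → ℝ) (m : ℕ) : ℝ :=
  ∫ u in unitCube r, (∏ i, u i) ^ m * wmu r α u

variable {r : ℕ} {α : ℕ → ℝ}

lemma pow_mul_weight_eq_rpow {i : ℕ} (hi : i < r) (m : ℕ) (s u : ℝ) :
    u ^ m * ((1 - u ^ r) ^ (s - 1) * u ^ (r - (i + 1))) =
      u ^ ((m + r - i : ℝ) - 1) * (1 - u ^ (r : ℝ)) ^ (s - 1) := by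
  have exponent_eq : (m + r - i : ℝ) - 1 = ((m + (r - (i + 1)) : ℕ) : ℝ) := by
    push_cast [Nat.cast_sub (Nat.succ_le_of_lt hi)]
    ring
  rw [exponent_eq, Real.rpow_natCast, Real.rpow_natCast, pow_add]
  ring

lemma integrableOn_pow_mul_weight {i : ℕ} (hi : i < r) (m : ℕ) {s : ℝ} (hs : 0 < s) :
    IntegrableOn (fun u : ℝ ↦ u ^ m * ((1 - u ^ r) ^ (s - 1) * u ^ (r - (i + 1))))
      (Set.Icc 0 1) := by
  have hir : (i : ℝ) < r := by exact_mod_cast hi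
  have hp : (0 : ℝ) < m + r - i := by linarith [m.cast_nonneg (α := ℝ)]
  have hr : (0 : ℝ) < r := by linarith [i.cast_nonneg (α := ℝ)]
  rw [integrableOn_Icc_iff_integrableOn_Ioo, integrableOn_congr_fun
    (fun u _ ↦ pow_mul_weight_eq_rpow hi m s u) measurableSet_Ioo]
  exact integrableOn_rpow_mul_one_sub_rpow_rpow hp hr hs

lemma integral_pow_mul_weight {i : ℕ} (hi : i < r) (m : ℕ) {s : ℝ} (hs : 0 < s) :
    ∫ u in Set.Icc (0 : ℝ) 1, u ^ m * ((1 - u ^ r) ^ (s - 1) * u ^ (r - (i + 1))) =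
      (r : ℝ)⁻¹ * beta ((m + r - i) / r) s := by
  have hir : (i : ℝ) < r := by exact_mod_cast hi
  have hp : (0 : ℝ) < m + r - i := by linarith [m.cast_nonneg (α := ℝ)]
  have hr : (0 : ℝ) < r := by linarith [i.cast_nonneg (α := ℝ)]
  rw [integral_Icc_eq_integral_Ioo, setIntegral_congr_fun measurableSet_Ioo
    fun u _ ↦ pow_mul_weight_eq_rpow hi m s u]
  exact integral_rpow_mul_one_sub_rpow_rpow hp hr hs

lemma volume_restrict_unitCube (r : ℕ) :
    (volume : Measure (Fin r → ℝ)).restrict (unitCube r) =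
      Measure.pi fun _ ↦ volume.restrict (Set.Icc (0 : ℝ) 1) := by
  rw [volume_pi, Measure.restrict_pi_pi]

lemma integrableOn_wmu (hpos : ∀ i < r, 0 < α i + (i : ℝ) / r) :
    IntegrableOn (wmu r α) (unitCube r) := by
  rw [IntegrableOn, volume_restrict_unitCube]
  refine Integrable.fintype_prod (f := fun (i : Fin r) (u : ℝ) ↦
    (1 - u ^ r) ^ (α i + (i : ℝ) / r - 1) * u ^ (r - (i + 1 : ℕ))) fun i ↦ ?_
  simpa [IntegrableOn] using integrableOn_pow_mul_weight i.2 0 (hpos i i.2)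

lemma weightMoment_eq_prod_beta (hpos : ∀ i < r, 0 < α i + (i : ℝ) / r) (m : ℕ) :
    weightMoment r α m =
      ∏ i ∈ Finset.range r, (r : ℝ)⁻¹ * beta ((m + r - i) / r) (α i + (i : ℝ) / r) := by
  simp only [weightMoment, wmu, ← Finset.prod_pow, ← Finset.prod_mul_distrib]
  rw [volume_restrict_unitCube, integral_fintype_prod_eq_prod fun (i : Fin r) (u : ℝ) ↦
      u ^ m * ((1 - u ^ r) ^ (α i + (i : ℝ) / r - 1) * u ^ (r - (i + 1 : ℕ))),
    ← Fin.prod_univ_eq_prod_range fun i ↦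
      (r : ℝ)⁻¹ * beta ((m + r - i) / r) (α i + (i : ℝ) / r)]
  exact Finset.prod_congr rfl fun i _ ↦ integral_pow_mul_weight i.2 m (hpos i i.2)

lemma cmu_eq_prod_div_beta (r : ℕ) (α : ℕ → ℝ) :
    cmu r α = ∏ i ∈ Finset.range r, r / beta (1 - (i : ℝ) / r) (α i + (i : ℝ) / r) := by
  refine Finset.prod_congr rfl fun i _ ↦ ?_
  rw [beta, div_div_eq_mul_div, mul_comm (Real.Gamma (1 - _)),
    show 1 - (i : ℝ) / r + (α i + i / r) = α i + 1 by ring]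

lemma cmu_mul_weightMoment (hpos : ∀ i < r, 0 < α i + (i : ℝ) / r) (n : ℕ) :
    cmu r α * weightMoment r α (n * r) =
      ∏ i ∈ Finset.range r, poch (1 - (i : ℝ) / r) n / poch (α i + 1) n := by
  rw [weightMoment_eq_prod_beta hpos, cmu_eq_prod_div_beta, ← Finset.prod_mul_distrib]
  refine Finset.prod_congr rfl fun i hi ↦ ?_
  have hir : i < r := Finset.mem_range.1 hi
  have hr : (0 : ℝ) < r := by exact_mod_cast i.zero_le.trans_lt hir
  have hp : 0 < 1 - (i : ℝ) / r := by
    rw [sub_pos, div_lt_one hr]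
    exact_mod_cast hir
  have hbeta := (ProbabilityTheory.beta_pos hp (hpos i hir)).ne'
  have shift_eq : ((n * r : ℕ) + r - i : ℝ) / r = 1 - (i : ℝ) / r + n := by
    push_cast
    field_simp
    ring
  rw [shift_eq, beta_add_natCast hp (hpos i hir),
    show 1 - (i : ℝ) / r + (α i + i / r) = α i + 1 by ring]
  generalize beta (1 - (i : ℝ) / r) (α i + (i : ℝ) / r) = B at hbeta ⊢
  field_simp

lemma ae_norm_prod_le_one (r : ℕ) :
    ∀ᵐ u ∂(volume : Measure (Fin r → ℝ)).restrict (unitCube r), ‖∏ i, u i‖ ≤ 1 := by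
  refine ae_restrict_of_forall_mem (.univ_pi fun _ ↦ measurableSet_Icc) fun u hu ↦ ?_
  rw [norm_prod]
  refine Finset.prod_le_one (fun i _ ↦ norm_nonneg _) fun i _ ↦ ?_
  rw [Real.norm_of_nonneg (hu i trivial).1]
  exact (hu i trivial).2

lemma hasSum_mul_weightMoment (hpos : ∀ i < r, 0 < α i + (i : ℝ) / r) {b : ℕ → ℂ}
    (hb : Summable fun m ↦ ‖b m‖) :
    HasSum (fun m ↦ b m * weightMoment r α m)
      (∫ u in unitCube r, (∑' m, b m * (∏ i, (u i : ℂ)) ^ m) * wmu r α u) := by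
  have norm_le : ∀ᵐ u ∂(volume : Measure (Fin r → ℝ)).restrict (unitCube r),
      ‖∏ i, (u i : ℂ)‖ ≤ 1 := by
    filter_upwards [ae_norm_prod_le_one r] with u hu
    rwa [← Complex.ofReal_prod, Complex.norm_real]
  have moment_eq (m : ℕ) : (weightMoment r α m : ℂ) =
      ∫ u in unitCube r, (∏ i, (u i : ℂ)) ^ m * wmu r α u := by
    rw [weightMoment, ← integral_complex_ofReal]
    push_cast
    rfl
  simp only [moment_eq]
  have prod_continuous : Continuous fun u : Fin r → ℝ ↦ ∏ i, (u i : ℂ) := by fun_prop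
  exact hasSum_integral_tsum_mul_pow_mul hb prod_continuous.aestronglyMeasurable norm_le
    (integrableOn_wmu hpos).ofReal

end WeightMoments

section Transmutation

/-- The Taylor sequence of the function whose image under `∑ₖ θ ^ (-k) D_μ ^ k` is the image under
`V_μ` of the function with Taylor sequence `c`. -/
def transmutedSeq (r : ℕ) (α : ℕ → ℝ) (c : ℕ → ℂ) (m : ℕ) : ℂ :=
  {m | r ∣ m}.indicator c m * (cmu r α * weightMoment r α m : ℝ)

variable {r : ℕ} {α : ℕ → ℝ} {c : ℕ → ℂ} {x : ℂ}

lemma IsEntireSeq.transmutedSeq (hpos : ∀ i < r, 0 < α i + (i : ℝ) / r) (hc : IsEntireSeq c) :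
    IsEntireSeq (transmutedSeq r α c) := by
  refine (hc.indicator {m | r ∣ m}).of_norm_le
    (C := |cmu r α| * ∫ u in unitCube r, ‖wmu r α u‖) fun m ↦ ?_
  rw [_root_.transmutedSeq, norm_mul, mul_comm, Complex.norm_real, norm_mul, Real.norm_eq_abs]
  gcongr
  exact norm_integral_pow_mul_le (ae_norm_prod_le_one r) (integrableOn_wmu hpos) m

lemma support_transmutedSeq_subset (r : ℕ) (α : ℕ → ℝ) (c : ℕ → ℂ) :
    Function.support (transmutedSeq r α c) ⊆ {m | r ∣ m} :=
  (Function.support_mul_subset_left _ _).trans Set.support_indicator_subset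

lemma transmutation_integrand_eq_tsum (hr : r ≠ 0) (α : ℕ → ℝ) (hc : IsEntireSeq c) (hx : x ≠ 0)
    (w : ℂ) :
    Tk r 0 (fun z ↦ powerSum c (z * w)) x + ∑ k ∈ Finset.Ico 1 r, th r ^ (-(k : ℤ)) *
        Tk r k (Lcomp r α k fun z ↦ powerSum c (z * w)) x =
      ∑' m, {m | r ∣ m}.indicator c m * monomialKernel r α x m * w ^ m := by
  have hcw := hc.mul_pow w
  have sum_eq : Tk r 0 (fun z ↦ powerSum c (z * w)) x + ∑ k ∈ Finset.Ico 1 r,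
      th r ^ (-(k : ℤ)) * Tk r k (Lcomp r α k fun z ↦ powerSum c (z * w)) x =
      ∑ k ∈ Finset.range r, th r ^ (-(k : ℤ)) *
        Tk r k (Lcomp r α k (powerSum fun m ↦ c m * w ^ m)) x := by
    simp only [powerSum_mul_right]
    rw [Finset.range_eq_Ico, Finset.sum_eq_sum_Ico_succ_bot (Nat.pos_of_ne_zero hr)]
    simp [Lcomp]
  simp only [sum_eq, Tk_Lcomp_powerSum hr hcw α _ hx]
  rw [← (hasSum_mul_monomialKernel (hcw.indicator {m | r ∣ m}) r α hx).tsum_eq]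
  refine tsum_congr fun m ↦ ?_
  rw [Set.indicator_mul_left]
  ring

theorem Vmu_powerSum (hr : r ≠ 0) (hpos : ∀ i < r, 0 < α i + (i : ℝ) / r) (hc : IsEntireSeq c)
    (hx : x ≠ 0) :
    Vmu r α (powerSum c) x = ∑ k ∈ Finset.range r,
      th r ^ (-(k : ℤ)) * (Dop r α)^[k] (powerSum (transmutedSeq r α c)) x := by
  have hsum := (hasSum_mul_monomialKernel (hc.indicator {m | r ∣ m}) r α hx).summable
  have hVmu := (hasSum_mul_weightMoment hpos hsum.norm).mul_left (cmu r α : ℂ)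
  have hDop := hasSum_mul_monomialKernel (hc.transmutedSeq hpos) r α hx
  calc Vmu r α (powerSum c) x
      = cmu r α * ∫ u in unitCube r, (∑' m, {m | r ∣ m}.indicator c m * monomialKernel r α x m *
          (∏ i, (u i : ℂ)) ^ m) * wmu r α u := by
        simp only [Vmu, transmutation_integrand_eq_tsum hr α hc hx]
    _ = ∑ k ∈ Finset.range r, th r ^ (-(k : ℤ)) *
          Lcomp r α k (powerSum (transmutedSeq r α c)) x := by
        refine hVmu.unique (hDop.congr_fun fun m ↦ ?_)
        rw [transmutedSeq]
        push_cast
        ring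
    _ = _ := Finset.sum_congr rfl fun k hk ↦ by
        rw [eqOn_Dop_iterate_powerSum (hc.transmutedSeq hpos) (support_transmutedSeq_subset r α c)
          α (Finset.mem_range.1 hk).le hx]

lemma transmutedSeq_exp_mul (hr : r ≠ 0) (hpos : ∀ i < r, 0 < α i + (i : ℝ) / r) (n : ℕ) :
    transmutedSeq r α (fun m ↦ th r ^ m / m.factorial) (n * r) =
      (-1) ^ n / ((∏ i ∈ Finset.range r, (poch (α i + 1) n : ℂ)) * r ^ (n * r)) := by
  have hfac : ((n * r).factorial : ℂ) ≠ 0 := by exact_mod_cast Nat.factorial_ne_zero _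
  rw [transmutedSeq, Set.indicator_of_mem (s := {m | r ∣ m}) (dvd_mul_left r n),
    cmu_mul_weightMoment hpos, Finset.prod_div_distrib, prod_poch_one_sub_div hr, mul_comm n r,
    pow_mul, th_pow_self hr, mul_comm r n]
  push_cast
  field_simp

lemma powerSum_transmutedSeq_exp (hr : r ≠ 0) (hpos : ∀ i < r, 0 < α i + (i : ℝ) / r) :
    powerSum (transmutedSeq r α fun m ↦ th r ^ m / m.factorial) = jmu r α := by
  ext z
  have support_subset : (Function.support fun m ↦
      transmutedSeq r α (fun m ↦ th r ^ m / m.factorial) m * z ^ m) ⊆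
      Set.range fun n ↦ n * r := by
    intro m hm
    obtain ⟨n, rfl⟩ := support_transmutedSeq_subset r α _ (left_ne_zero_of_mul hm)
    exact ⟨n, mul_comm n r⟩
  rw [powerSum, jmu, ← (mul_left_injective₀ hr).tsum_eq support_subset]
  exact tsum_congr fun n ↦ by rw [transmutedSeq_exp_mul hr hpos]; ring

end Transmutation

theorem stmt7 (r : ℕ) (hr : 2 ≤ r) (α : ℕ → ℝ)
    (hα : ∀ i < r, ∀ n : ℕ, α i ≠ -((n : ℝ) + 1))
    (hpos : ∀ i < r, 0 < α i + (i : ℝ) / r) :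
    ∀ x : ℂ, x ≠ 0 →
      Emu r α x = (cmu r α : ℂ) *
        ∫ u in Set.univ.pi (fun _ : Fin r => Set.Icc (0:ℝ) 1),
          (Tk r 0 (fun z => Complex.exp (th r * z * ∏ i, (u i : ℂ))) x +
            ∑ k ∈ Finset.Ico 1 r,
              th r ^ (-(k : ℤ)) *
                Tk r k (Lcomp r α k (fun z => Complex.exp (th r * z * ∏ i, (u i : ℂ)))) x) *
            ((wmu r α u : ℝ) : ℂ) := by
  intro x hx
  have hr₀ : r ≠ 0 := by omega
  calc Emu r α x
      = Vmu r α (powerSum fun m ↦ th r ^ m / m.factorial) x := by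
        rw [Vmu_powerSum hr₀ hpos (isEntireSeq_pow_div_factorial _) hx,
          powerSum_transmutedSeq_exp hr₀ hpos, Emu]
    _ = _ := by
        simp only [Vmu, powerSum_pow_div_factorial, mul_assoc]
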